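/- Let n ≥ 1, let ψ : T_B → T_B be a biholomorphism (a holomorphic bijection of T_B onto itself with holomorphic inverse), and let g : T_B → ℂ be twice continuously differentiable (as a function of the underlying real variables). Then Δ̃(g∘ψ)(z) = (Δ̃g)(ψ(z)) for all z ∈ T_B, where Δ̃ is the invariant Laplacian defined by Δ̃g(z) = 8ρ(z)[ Σ_{j=1}^{n−1} ∂²g/∂z_j∂z̄_j(z) + Σ_{j=1}^{n−1} 2y_j ∂²g/∂z_n∂z̄_j(z) + Σ_{j=1}^{n−1} 2y_j ∂²g/∂z̄_n∂z_j(z) + 2(y_n + |y'|²) ∂²g/∂z̄_n∂z_n(z) ]. -/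

import Mathlib

open MeasureTheory Complex ComplexConjugate

noncomputable section

/-- The tube domain `T_B ⊆ ℂ^(n+1)` (paper dimension `n+1 ≥ 1`). -/
def TB (n : ℕ) : Set (Fin (n + 1) → ℂ) :=
  {z | ∑ k : Fin n, (z k.castSucc).im ^ 2 < (z (Fin.last n)).im}

/-- `ρ(z) = y_n − |y'|²`. -/
def rho (n : ℕ) (z : Fin (n + 1) → ℂ) : ℝ :=
  (z (Fin.last n)).im - ∑ k : Fin n, (z k.castSucc).im ^ 2

/-- `ρ(z,w) = (1/4)(Σ (z_k − conj w_k)² − 2i(z_n − conj w_n))`. -/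
def rho2 (n : ℕ) (z w : Fin (n + 1) → ℂ) : ℂ :=
  (1 / 4) * ((∑ k : Fin n, (z k.castSucc - conj (w k.castSucc)) ^ 2)
    - 2 * Complex.I * (z (Fin.last n) - conj (w (Fin.last n))))

/-- The point `𝐢 = (0,…,0,i) ∈ T_B`. -/
def iPt (n : ℕ) : Fin (n + 1) → ℂ := fun j => if j = Fin.last n then Complex.I else 0

/-- `c_α = Γ(n+1+α)/(2^(n+1) πⁿ Γ(α+1))` (paper `n` = `n+1` here). -/
def cA (n : ℕ) (α : ℝ) : ℝ :=
  Real.Gamma ((n : ℝ) + 2 + α) / (2 ^ (n + 2) * Real.pi ^ (n + 1) * Real.Gamma (α + 1))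

/-- Wirtinger derivative `∂g/∂z_j = (1/2)(∂g/∂x_j − i ∂g/∂y_j)`. -/
def wdz (n : ℕ) (j : Fin (n + 1)) (g : (Fin (n + 1) → ℂ) → ℂ) : (Fin (n + 1) → ℂ) → ℂ :=
  fun z => (1 / 2) * (fderiv ℝ g z (Pi.single j 1) - Complex.I * fderiv ℝ g z (Pi.single j Complex.I))

/-- Wirtinger derivative `∂g/∂z̄_j = (1/2)(∂g/∂x_j + i ∂g/∂y_j)`. -/
def wdzbar (n : ℕ) (j : Fin (n + 1)) (g : (Fin (n + 1) → ℂ) → ℂ) : (Fin (n + 1) → ℂ) → ℂ :=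
  fun z => (1 / 2) * (fderiv ℝ g z (Pi.single j 1) + Complex.I * fderiv ℝ g z (Pi.single j Complex.I))

/-- The invariant Laplacian `Δ̃` on `T_B`. -/
def invLap (n : ℕ) (g : (Fin (n + 1) → ℂ) → ℂ) (z : Fin (n + 1) → ℂ) : ℂ :=
  8 * ((rho n z : ℝ) : ℂ) *
    ((∑ j : Fin n, wdz n j.castSucc (wdzbar n j.castSucc g) z)
      + (∑ j : Fin n, 2 * ((z j.castSucc).im : ℂ) * wdz n (Fin.last n) (wdzbar n j.castSucc g) z)
      + (∑ j : Fin n, 2 * ((z j.castSucc).im : ℂ) * wdzbar n (Fin.last n) (wdz n j.castSucc g) z)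
      + 2 * ((((z (Fin.last n)).im + ∑ j : Fin n, (z j.castSucc).im ^ 2 : ℝ)) : ℂ)
          * wdzbar n (Fin.last n) (wdz n (Fin.last n) g) z)

/-!
For `p ∈ T_B` let `Φ_p` be the explicit biholomorphism from the unit ball onto `T_B` with
`Φ_p(0) = p` (a Cayley transform followed by a polynomial map). The coefficients of the invariant
Laplacian are exactly such that `Δ̃g(p)` is the Euclidean Laplacian of `g ∘ Φ_p` at `0`. If `ψ` is
an automorphism of `T_B` and `q = ψ(p)`, then `Φ_q⁻¹ ∘ ψ ∘ Φ_p` is an automorphism of the ball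
fixing `0`, hence a linear isometry by the equality case of the Schwarz lemma, and the Euclidean
Laplacian does not see linear isometries.
-/

open Filter Topology Set Metric Function InnerProductSpace Laplacian

section SecondDerivative

variable {𝕜 E F G : Type*} [NontriviallyNormedField 𝕜] [NormedAddCommGroup E] [NormedSpace 𝕜 E]
  [NormedAddCommGroup F] [NormedSpace 𝕜 F] [NormedAddCommGroup G] [NormedSpace 𝕜 G]

theorem hasFDerivAt_fderiv_apply {h : E → F} {x : E} (hh : ContDiffAt 𝕜 2 h x) (v : E) :
    HasFDerivAt (fun y ↦ fderiv 𝕜 h y v) ((fderiv 𝕜 (fderiv 𝕜 h) x).flip v) x :=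
  (ContinuousLinearMap.apply 𝕜 F v).hasFDerivAt.comp x
    ((hh.fderiv_right (m := 1) le_rfl).differentiableAt one_ne_zero).hasFDerivAt

theorem fderiv_fderiv_comp_apply {h : F → G} {f : E → F} {x : E}
    (hh : ContDiffAt 𝕜 2 h (f x)) (hf : ContDiffAt 𝕜 2 f x) (v w : E) :
    fderiv 𝕜 (fderiv 𝕜 (h ∘ f)) x v w =
      fderiv 𝕜 (fderiv 𝕜 h) (f x) (fderiv 𝕜 f x v) (fderiv 𝕜 f x w) +
        fderiv 𝕜 h (f x) (fderiv 𝕜 (fderiv 𝕜 f) x v w) := by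
  have hchain : fderiv 𝕜 (h ∘ f) =ᶠ[𝓝 x] fun y ↦ (fderiv 𝕜 h (f y)).comp (fderiv 𝕜 f y) := by
    filter_upwards [hf.eventually (by simp),
      hf.continuousAt.eventually (hh.eventually (by simp))] with y hfy hhy
    exact fderiv_comp y (hhy.differentiableAt two_ne_zero) (hfy.differentiableAt two_ne_zero)
  have hDh : DifferentiableAt 𝕜 (fderiv 𝕜 h) (f x) :=
    (hh.fderiv_right (m := 1) le_rfl).differentiableAt one_ne_zero
  have hDf : DifferentiableAt 𝕜 (fderiv 𝕜 f) x :=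
    (hf.fderiv_right (m := 1) le_rfl).differentiableAt one_ne_zero
  have hf' : HasFDerivAt f (fderiv 𝕜 f x) x := (hf.differentiableAt two_ne_zero).hasFDerivAt
  have hprod : HasFDerivAt (fun y ↦ (fderiv 𝕜 h (f y)).comp (fderiv 𝕜 f y)) _ x :=
    (hDh.hasFDerivAt.comp x hf').clm_comp hDf.hasFDerivAt
  rw [hchain.fderiv_eq, hprod.fderiv]
  simp [add_comm]

end SecondDerivative

section LeviForm

variable {E F G : Type*} [NormedAddCommGroup E] [NormedSpace ℂ E] [NormedSpace ℝ E]
  [IsScalarTower ℝ ℂ E] [NormedAddCommGroup F] [NormedSpace ℂ F] [NormedSpace ℝ F]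
  [IsScalarTower ℝ ℂ F] [NormedAddCommGroup G] [NormedSpace ℝ G]

theorem fderiv_fderiv_I_smul_I_smul {f : E → F} {x : E} (hf : ContDiffAt ℂ 2 f x) (v w : E) :
    fderiv ℝ (fderiv ℝ f) x (I • v) (I • w) = -fderiv ℝ (fderiv ℝ f) x v w := by
  have hD (u : Fin 2 → E) : fderiv ℝ (fderiv ℝ f) x (u 0) (u 1) = iteratedFDeriv ℂ 2 f x u := by
    rw [← iteratedFDeriv_two_apply, ← hf.restrictScalars_iteratedFDeriv]
    rfl
  have hI := (iteratedFDeriv ℂ 2 f x).map_smul_univ (fun _ ↦ I) ![v, w]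
  simpa [← hD] using hI

/-- The (unnormalised) Levi form of `h` at `x`: the part of the second real derivative that is
invariant under multiplication by `I`, without the factor `1 / 2`. -/
def leviForm (h : E → G) (x : E) : E →L[ℝ] E →L[ℝ] G :=
  fderiv ℝ (fderiv ℝ h) x + (fderiv ℝ (fderiv ℝ h) x).bilinearComp
    (I • ContinuousLinearMap.id ℝ E) (I • ContinuousLinearMap.id ℝ E)

theorem leviForm_apply (h : E → G) (x v w : E) :
    leviForm h x v w =
      fderiv ℝ (fderiv ℝ h) x v w + fderiv ℝ (fderiv ℝ h) x (I • v) (I • w) :=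
  rfl

theorem leviForm_comm {h : E → G} {x : E} (hh : ContDiffAt ℝ 2 h x) (v w : E) :
    leviForm h x v w = leviForm h x w v := by
  have hsymm := hh.isSymmSndFDerivAt (by simp)
  rw [leviForm_apply, leviForm_apply, hsymm v w, hsymm (I • v) (I • w)]

theorem leviForm_I_smul_self {h : E → G} {x : E} (hh : ContDiffAt ℝ 2 h x) (v : E) :
    leviForm h x v (I • v) = 0 := by
  rw [leviForm_apply, hh.isSymmSndFDerivAt (by simp) v, smul_smul, I_mul_I, neg_one_smul, map_neg,
    add_neg_cancel]

theorem leviForm_comp {h : F → G} {f : E → F} {x : E} (hh : ContDiffAt ℝ 2 h (f x))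
    (hf : ContDiffAt ℂ 2 f x) (v w : E) :
    leviForm (h ∘ f) x v w = leviForm h (f x) (fderiv ℂ f x v) (fderiv ℂ f x w) := by
  have hf' : fderiv ℝ f x = (fderiv ℂ f x).restrictScalars ℝ :=
    (hf.differentiableAt two_ne_zero).fderiv_restrictScalars ℝ
  have hfR : ContDiffAt ℝ 2 f x := hf.restrict_scalars ℝ
  simp only [leviForm_apply, fderiv_fderiv_comp_apply hh hfR, fderiv_fderiv_I_smul_I_smul hf, hf',
    ContinuousLinearMap.coe_restrictScalars', map_smul, map_neg]
  abel

end LeviForm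

section Laplacian

variable {E F G : Type*} [NormedAddCommGroup E] [InnerProductSpace ℝ E] [FiniteDimensional ℝ E]
  [NormedAddCommGroup F] [InnerProductSpace ℝ F] [FiniteDimensional ℝ F] [NormedAddCommGroup G]
  [NormedSpace ℝ G]

theorem laplacian_comp_linearIsometryEquiv (h : F → G) (U : E ≃ₗᵢ[ℝ] F) (x : E) :
    Δ (h ∘ U) x = Δ h (U x) := by
  have hD (v : E) : iteratedFDeriv ℝ 2 (h ∘ U) x ![v, v] =
      iteratedFDeriv ℝ 2 h (U x) ![U v, U v] := by
    have hU := U.toContinuousLinearEquiv.iteratedFDerivWithin_comp_right h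
      uniqueDiffOn_univ (mem_univ (U x)) 2
    have hv : (fun i ↦ U (![v, v] i)) = ![U v, U v] := by
      funext i
      fin_cases i <;> rfl
    simpa [iteratedFDerivWithin_univ, hv] using DFunLike.congr_fun hU ![v, v]
  rw [laplacian_eq_iteratedFDeriv_orthonormalBasis _ (stdOrthonormalBasis ℝ E),
    laplacian_eq_iteratedFDeriv_orthonormalBasis _ ((stdOrthonormalBasis ℝ E).map U)]
  simp only [hD, OrthonormalBasis.map_apply]

theorem laplacian_eq_sum_leviForm {ι : Type*} [Fintype ι] [DecidableEq ι]
    (h : EuclideanSpace ℂ ι → G) (x : EuclideanSpace ℂ ι) :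
    Δ h x = ∑ j, leviForm h x (EuclideanSpace.single j 1) (EuclideanSpace.single j 1) := by
  have hI (j : ι) : I • EuclideanSpace.single j (1 : ℂ) = PiLp.single 2 j I := by
    ext k
    simp
  rw [laplacian_eq_iteratedFDeriv_orthonormalBasis h
    (Pi.orthonormalBasis fun _ : ι ↦ Complex.orthonormalBasisOneI)]
  simp [hI, Fintype.sum_sigma, leviForm_apply, iteratedFDeriv_two_apply,
    Pi.orthonormalBasis_apply]

end Laplacian

section Cartan

variable {E F : Type*} [NormedAddCommGroup E] [NormedSpace ℂ E] [NormedAddCommGroup F]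
  [NormedSpace ℂ F] {R : ℝ}

theorem exists_ne_zero_smul_mem_ball_zero (hR : 0 < R) (v : E) :
    ∃ c : ℂ, c ≠ 0 ∧ c • v ∈ ball (0 : E) R := by
  have hlim : Tendsto (fun c : ℂ ↦ c • v) (𝓝[≠] 0) (𝓝 0) := by
    have hcont : Continuous fun c : ℂ ↦ c • v := by fun_prop
    simpa using (hcont.tendsto 0).mono_left nhdsWithin_le_nhds
  exact (eventually_mem_nhdsWithin.and (hlim.eventually (ball_mem_nhds 0 hR))).exists

theorem eqOn_fderiv_zero_of_norm_map_eq [StrictConvexSpace ℝ F] {f : E → F}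
    (hf : DifferentiableOn ℂ f (ball 0 R)) (hnorm : ∀ z ∈ ball 0 R, ‖f z‖ = ‖z‖) :
    EqOn f (fderiv ℂ f 0) (ball 0 R) := by
  intro v hv
  have hR : 0 < R := nonempty_ball.1 ⟨v, hv⟩
  have hf0 : f 0 = 0 := by simpa using hnorm 0 (mem_ball_self hR)
  obtain rfl | hv0 := eq_or_ne v 0
  · simp [hf0]
  have hvpos : 0 < ‖v‖ := norm_pos_iff.2 hv0
  have hline : MapsTo (fun t : ℂ ↦ t • v) (ball 0 (R / ‖v‖)) (ball 0 R) := fun t ht ↦ by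
    rwa [mem_ball_zero_iff, norm_smul, ← lt_div_iff₀ hvpos, ← mem_ball_zero_iff]
  have h1 : (1 : ℂ) ∈ ball (0 : ℂ) (R / ‖v‖) := by
    simpa [one_lt_div hvpos] using hv
  have hslope : dslope (fun t : ℂ ↦ f (t • v)) 0 1 = f v := by
    simp [dslope_of_ne, slope_def_module, hf0]
  -- The slice `t ↦ f (t • v)` attains equality in the Schwarz lemma at `t = 1`.
  have hlinear : EqOn (fun t : ℂ ↦ f (t • v)) (fun t ↦ t • f v) (ball 0 (R / ‖v‖)) := by
    have hslice : DifferentiableOn ℂ (fun t : ℂ ↦ f (t • v)) (ball 0 (R / ‖v‖)) :=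
      hf.comp (by fun_prop) hline
    have := affine_of_mapsTo_ball_of_norm_dslope_eq_div (R₂ := R) hslice ?_ h1 ?_
    · simpa [hslope, hf0] using this
    · intro t ht
      simpa [hf0, hnorm _ (hline ht)] using (mem_ball_zero_iff.1 (hline ht)).le
    · rw [hslope, hnorm v hv]
      field_simp
  have hderiv : HasDerivAt (fun t : ℂ ↦ f (t • v)) (f v) 0 := by
    refine HasDerivAt.congr_of_eventuallyEq ?_
      (hlinear.eventuallyEq_of_mem (ball_mem_nhds 0 (by positivity)))
    simpa using (hasDerivAt_id (0 : ℂ)).smul_const (f v)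
  have hf' : HasFDerivAt f (fderiv ℂ f 0) ((0 : ℂ) • v) := by
    simpa using (hf.differentiableAt (ball_mem_nhds 0 hR)).hasFDerivAt
  have hchain := hf'.comp_hasDerivAt (0 : ℂ) ((hasDerivAt_id (0 : ℂ)).smul_const v)
  simpa using hderiv.unique hchain

theorem exists_linearIsometryEquiv_eqOn_ball [StrictConvexSpace ℝ F] {f : E → F} {g : F → E}
    (hR : 0 < R) (hf : DifferentiableOn ℂ f (ball 0 R)) (hg : DifferentiableOn ℂ g (ball 0 R))
    (hfR : MapsTo f (ball 0 R) (ball 0 R)) (hgR : MapsTo g (ball 0 R) (ball 0 R))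
    (hgf : LeftInvOn g f (ball 0 R)) (hfg : RightInvOn g f (ball 0 R)) (hf0 : f 0 = 0) :
    ∃ U : E ≃ₗᵢ[ℂ] F, EqOn f U (ball 0 R) := by
  have hg0 : g 0 = 0 := by simpa [hf0] using hgf (mem_ball_self hR)
  have hnorm (z : E) (hz : z ∈ ball 0 R) : ‖f z‖ = ‖z‖ := by
    refine (norm_le_norm_of_mapsTo_ball hf (hfR.mono_right ball_subset_closedBall) hf0
      (mem_ball_zero_iff.1 hz)).antisymm ?_
    simpa [hgf hz] using norm_le_norm_of_mapsTo_ball hg (hgR.mono_right ball_subset_closedBall)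
      hg0 (mem_ball_zero_iff.1 (hfR hz))
  have heq := eqOn_fderiv_zero_of_norm_map_eq hf hnorm
  have hisom (v : E) : ‖fderiv ℂ f 0 v‖ = ‖v‖ := by
    obtain ⟨c, hc, hcv⟩ := exists_ne_zero_smul_mem_ball_zero hR v
    have := hnorm _ hcv
    rwa [heq hcv, map_smul, norm_smul, norm_smul, mul_right_inj' (norm_ne_zero_iff.2 hc)] at this
  have hsurj (w : F) : ∃ v, fderiv ℂ f 0 v = w := by
    obtain ⟨c, hc, hcw⟩ := exists_ne_zero_smul_mem_ball_zero hR w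
    refine ⟨c⁻¹ • g (c • w), ?_⟩
    rw [map_smul, ← heq (hgR hcw), hfg hcw, inv_smul_smul₀ hc]
  exact ⟨.ofSurjective ⟨(fderiv ℂ f 0).toLinearMap, hisom⟩ hsurj, heq⟩

end Cartan

section Perspective

variable {𝕜 E : Type*} [NontriviallyNormedField 𝕜] [NormedAddCommGroup E] [NormedSpace 𝕜 E]

/-- The projective map `u ↦ u / (1 + ℓ u)` attached to a linear form `ℓ`, with the junk value `0`
on the hyperplane `1 + ℓ u = 0`. The Cayley transform of the ball is an instance. -/
def perspective (ℓ : E →L[𝕜] 𝕜) (u : E) : E :=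
  (1 + ℓ u)⁻¹ • u

theorem perspective_zero (ℓ : E →L[𝕜] 𝕜) : perspective ℓ 0 = 0 :=
  smul_zero _

theorem one_sub_apply_perspective (ℓ : E →L[𝕜] 𝕜) {u : E} (hu : 1 + ℓ u ≠ 0) :
    1 - ℓ (perspective ℓ u) = (1 + ℓ u)⁻¹ := by
  rw [perspective, map_smul, smul_eq_mul]
  field_simp
  ring

theorem perspective_neg_perspective (ℓ : E →L[𝕜] 𝕜) {u : E} (hu : 1 + ℓ u ≠ 0) :
    perspective (-ℓ) (perspective ℓ u) = u := by
  rw [perspective, neg_apply, ← sub_eq_add_neg, one_sub_apply_perspective ℓ hu, inv_inv,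
    perspective, smul_inv_smul₀ hu]

theorem contDiffAt_perspective (ℓ : E →L[𝕜] 𝕜) {u : E} (hu : 1 + ℓ u ≠ 0) {m : WithTop ℕ∞} :
    ContDiffAt 𝕜 m (perspective ℓ) u :=
  ((contDiffAt_const.add ℓ.contDiff.contDiffAt).inv hu).smul contDiffAt_id

theorem hasFDerivAt_perspective_zero (ℓ : E →L[𝕜] 𝕜) :
    HasFDerivAt (perspective ℓ) (ContinuousLinearMap.id 𝕜 E) 0 := by
  have hinv : DifferentiableAt 𝕜 (fun u ↦ (1 + ℓ u)⁻¹) (0 : E) :=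
    ((differentiableAt_const 1).add ℓ.differentiableAt).inv (by simp)
  have hsmul : HasFDerivAt (perspective ℓ) _ 0 := hinv.hasFDerivAt.smul (hasFDerivAt_id 0)
  simpa using hsmul

end Perspective

section Siegel

variable {n : ℕ}

/-- The defining function `1 + 2 Im aₙ - |a'|²` of the Siegel domain. -/
def siegelRho (a : EuclideanSpace ℂ (Fin (n + 1))) : ℝ :=
  1 + 2 * (a (Fin.last n)).im - ∑ k : Fin n, ‖a k.castSucc‖ ^ 2

/-- The linear form `u ↦ i uₙ`, whose projective map is the Cayley transform from the ball to the
Siegel domain. -/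
def cayleyForm (n : ℕ) : EuclideanSpace ℂ (Fin (n + 1)) →L[ℂ] ℂ :=
  I • EuclideanSpace.proj (Fin.last n)

theorem cayleyForm_apply (u : EuclideanSpace ℂ (Fin (n + 1))) :
    cayleyForm n u = I * u (Fin.last n) :=
  rfl

theorem one_add_cayleyForm_ne_zero {u : EuclideanSpace ℂ (Fin (n + 1))} (hu : u ∈ ball 0 1) :
    1 + cayleyForm n u ≠ 0 := by
  have hlt : ‖cayleyForm n u‖ < 1 := by
    rw [cayleyForm_apply, norm_mul, norm_I, one_mul]
    exact (PiLp.norm_apply_le u _).trans_lt (mem_ball_zero_iff.1 hu)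
  intro h
  rw [← neg_eq_of_add_eq_zero_right h, norm_neg, norm_one] at hlt
  exact hlt.false

theorem one_sub_cayleyForm_ne_zero {a : EuclideanSpace ℂ (Fin (n + 1))} (ha : 0 < siegelRho a) :
    1 + (-cayleyForm n) a ≠ 0 := by
  have hsum : 0 ≤ ∑ k : Fin n, ‖a k.castSucc‖ ^ 2 := by positivity
  have hre : (1 + (-cayleyForm n) a).re = 1 + (a (Fin.last n)).im := by
    simp [cayleyForm_apply]
  intro h
  rw [h, zero_re] at hre
  unfold siegelRho at ha
  linarith

theorem siegelRho_cayley {u : EuclideanSpace ℂ (Fin (n + 1))} (hu : 1 + cayleyForm n u ≠ 0) :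
    siegelRho (perspective (cayleyForm n) u) = (1 - ‖u‖ ^ 2) / ‖1 + cayleyForm n u‖ ^ 2 := by
  have hc : ‖1 + cayleyForm n u‖ ^ 2 ≠ 0 := by simpa using hu
  have hlast : 1 + 2 * ((1 + cayleyForm n u)⁻¹ * u (Fin.last n)).im =
      (1 - ‖u (Fin.last n)‖ ^ 2) / ‖1 + cayleyForm n u‖ ^ 2 := by
    rw [← normSq_eq_norm_sq] at hc
    rw [← normSq_eq_norm_sq, ← normSq_eq_norm_sq, mul_im, inv_re, inv_im]
    field_simp
    simp only [normSq_apply, cayleyForm_apply, add_re, add_im, mul_re, mul_im, one_re, one_im,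
      I_re, I_im]
    ring
  have hsum : ∑ k : Fin n, ‖(1 + cayleyForm n u)⁻¹ * u k.castSucc‖ ^ 2 =
      (∑ k : Fin n, ‖u k.castSucc‖ ^ 2) / ‖1 + cayleyForm n u‖ ^ 2 := by
    rw [Finset.sum_div]
    refine Finset.sum_congr rfl fun k _ ↦ ?_
    rw [norm_mul, norm_inv, mul_pow, inv_pow, inv_mul_eq_div]
  simp only [siegelRho, perspective, PiLp.smul_apply, smul_eq_mul]
  rw [hlast, hsum, EuclideanSpace.norm_sq_eq, Fin.sum_univ_castSucc]
  ring

theorem siegelRho_cayley_pos {u : EuclideanSpace ℂ (Fin (n + 1))} (hu : u ∈ ball 0 1) :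
    0 < siegelRho (perspective (cayleyForm n) u) := by
  have hc := one_add_cayleyForm_ne_zero hu
  rw [siegelRho_cayley hc]
  have hlt : ‖u‖ ^ 2 < 1 := by
    simpa [sq_lt_one_iff_abs_lt_one] using hu
  have := norm_pos_iff.2 hc
  exact div_pos (sub_pos.2 hlt) (by positivity)

theorem cayley_symm_mem_ball {a : EuclideanSpace ℂ (Fin (n + 1))} (ha : 0 < siegelRho a) :
    perspective (-cayleyForm n) a ∈ ball (0 : EuclideanSpace ℂ (Fin (n + 1))) 1 := by
  have ha' := one_sub_cayleyForm_ne_zero ha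
  set u := perspective (-cayleyForm n) a with hu
  have hc : 1 + cayleyForm n u ≠ 0 := by
    have := one_sub_apply_perspective (-cayleyForm n) ha'
    rw [neg_apply, sub_neg_eq_add] at this
    rw [this]
    exact inv_ne_zero ha'
  have hau : perspective (cayleyForm n) u = a := by
    simpa using perspective_neg_perspective (-cayleyForm n) ha'
  rw [← hau, siegelRho_cayley hc, div_pos_iff_of_pos_right (by positivity)] at ha
  rw [mem_ball_zero_iff, ← abs_norm, ← sq_lt_one_iff_abs_lt_one]
  linarith

end Siegel

section TubeChart

variable {n : ℕ} {p : Fin (n + 1) → ℂ}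

theorem mem_TB_iff_rho_pos {z : Fin (n + 1) → ℂ} : z ∈ TB n ↔ 0 < rho n z :=
  (sub_pos (a := (z (Fin.last n)).im)).symm

theorem isOpen_TB (n : ℕ) : IsOpen (TB n) :=
  isOpen_lt (by fun_prop) (by fun_prop)

/-- The dilation factor of the chart `tubeChart p` in the first `n` coordinates. -/
def tubeScale (p : Fin (n + 1) → ℂ) : ℝ :=
  √(2 * rho n p)

theorem tubeScale_pos (hp : p ∈ TB n) : 0 < tubeScale p :=
  Real.sqrt_pos.2 (mul_pos two_pos (mem_TB_iff_rho_pos.1 hp))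

theorem tubeScale_sq (hp : p ∈ TB n) : tubeScale p ^ 2 = 2 * rho n p :=
  Real.sq_sqrt (mul_pos two_pos (mem_TB_iff_rho_pos.1 hp)).le

/-- The derivative at the centre of the chart `tubeChart p`. -/
def tubeFrame (p : Fin (n + 1) → ℂ) : EuclideanSpace ℂ (Fin (n + 1)) →L[ℂ] (Fin (n + 1) → ℂ) :=
  .pi <| Fin.snoc (α := fun _ ↦ EuclideanSpace ℂ (Fin (n + 1)) →L[ℂ] ℂ)
    (fun k ↦ (tubeScale p : ℂ) • EuclideanSpace.proj k.castSucc)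
    (∑ k : Fin n, (2 * tubeScale p * (p k.castSucc).im : ℂ) • EuclideanSpace.proj k.castSucc +
      (2 * rho n p : ℂ) • EuclideanSpace.proj (Fin.last n))

@[simp]
theorem tubeFrame_apply_castSucc (a : EuclideanSpace ℂ (Fin (n + 1))) (k : Fin n) :
    tubeFrame p a k.castSucc = tubeScale p * a k.castSucc := by
  simp [tubeFrame]

@[simp]
theorem tubeFrame_apply_last (a : EuclideanSpace ℂ (Fin (n + 1))) :
    tubeFrame p a (Fin.last n) =
      2 * tubeScale p * ∑ k : Fin n, (p k.castSucc).im * a k.castSucc +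
        2 * rho n p * a (Fin.last n) := by
  simp [tubeFrame, Finset.mul_sum, mul_assoc]

theorem tubeFrame_single_castSucc (k : Fin n) :
    tubeFrame p (EuclideanSpace.single k.castSucc 1) =
      tubeScale p • (Pi.single k.castSucc 1 +
        (2 * (p k.castSucc).im) • (Pi.single (Fin.last n) 1 : Fin (n + 1) → ℂ)) := by
  ext j
  cases j using Fin.lastCases with
  | cast i => simp [Pi.single_apply]
  | last => simp [(Fin.castSucc_lt_last k).ne', mul_assoc, mul_left_comm]

theorem tubeFrame_single_last :
    tubeFrame p (EuclideanSpace.single (Fin.last n) 1) =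
      (2 * rho n p) • (Pi.single (Fin.last n) 1 : Fin (n + 1) → ℂ) := by
  ext j
  cases j using Fin.lastCases with
  | cast i => simp [(Fin.castSucc_lt_last _).ne]
  | last => simp [(Fin.castSucc_lt_last _).ne]

/-- The polynomial biholomorphism from the Siegel domain `0 < siegelRho` onto `TB n` sending `0`
to `p`. -/
def siegelToTube (p : Fin (n + 1) → ℂ) (a : EuclideanSpace ℂ (Fin (n + 1))) : Fin (n + 1) → ℂ :=
  p + tubeFrame p a - Pi.single (Fin.last n) (I * rho n p * ∑ k : Fin n, a k.castSucc ^ 2)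

/-- The inverse of `siegelToTube p`. -/
def tubeToSiegel (p z : Fin (n + 1) → ℂ) : EuclideanSpace ℂ (Fin (n + 1)) :=
  WithLp.toLp 2 <| Fin.snoc (α := fun _ ↦ ℂ)
    (fun k ↦ (z k.castSucc - p k.castSucc) / tubeScale p)
    ((z (Fin.last n) - p (Fin.last n) -
      2 * ∑ k : Fin n, (p k.castSucc).im * (z k.castSucc - p k.castSucc) +
        I / 2 * ∑ k : Fin n, (z k.castSucc - p k.castSucc) ^ 2) / (2 * rho n p))

theorem siegelToTube_apply_castSucc (a : EuclideanSpace ℂ (Fin (n + 1))) (k : Fin n) :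
    siegelToTube p a k.castSucc = p k.castSucc + tubeScale p * a k.castSucc := by
  simp [siegelToTube, (Fin.castSucc_lt_last k).ne]

theorem siegelToTube_apply_last (a : EuclideanSpace ℂ (Fin (n + 1))) :
    siegelToTube p a (Fin.last n) = p (Fin.last n) +
      (2 * tubeScale p * ∑ k : Fin n, (p k.castSucc).im * a k.castSucc +
        2 * rho n p * a (Fin.last n)) - I * rho n p * ∑ k : Fin n, a k.castSucc ^ 2 := by
  simp [siegelToTube]

theorem tubeToSiegel_apply_castSucc (z : Fin (n + 1) → ℂ) (k : Fin n) :
    tubeToSiegel p z k.castSucc = (z k.castSucc - p k.castSucc) / tubeScale p := by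
  simp [tubeToSiegel]

theorem tubeToSiegel_apply_last (z : Fin (n + 1) → ℂ) :
    tubeToSiegel p z (Fin.last n) = (z (Fin.last n) - p (Fin.last n) -
      2 * ∑ k : Fin n, (p k.castSucc).im * (z k.castSucc - p k.castSucc) +
        I / 2 * ∑ k : Fin n, (z k.castSucc - p k.castSucc) ^ 2) / (2 * rho n p) := by
  simp [tubeToSiegel]

theorem rho_siegelToTube (hp : p ∈ TB n) (a : EuclideanSpace ℂ (Fin (n + 1))) :
    rho n (siegelToTube p a) = rho n p * siegelRho a := by
  have hk (k : Fin n) : (siegelToTube p a k.castSucc).im ^ 2 = (p k.castSucc).im ^ 2 +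
      2 * tubeScale p * ((p k.castSucc).im * (a k.castSucc).im) +
        2 * rho n p * (a k.castSucc).im ^ 2 := by
    rw [siegelToTube_apply_castSucc, add_im, im_ofReal_mul]
    linear_combination (a k.castSucc).im ^ 2 * tubeScale_sq hp
  have hn : (siegelToTube p a (Fin.last n)).im = (p (Fin.last n)).im +
      2 * tubeScale p * ∑ k : Fin n, (p k.castSucc).im * (a k.castSucc).im +
        2 * rho n p * (a (Fin.last n)).im -
          rho n p * ∑ k : Fin n, ((a k.castSucc).re ^ 2 - (a k.castSucc).im ^ 2) := by
    rw [siegelToTube_apply_last]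
    simp [← add_assoc, pow_two]
  have hnorm : ∑ k : Fin n, ‖a k.castSucc‖ ^ 2 =
      ∑ k : Fin n, (a k.castSucc).re ^ 2 + ∑ k : Fin n, (a k.castSucc).im ^ 2 := by
    simp only [← normSq_eq_norm_sq, normSq_apply, ← pow_two, Finset.sum_add_distrib]
  have hp' : rho n p = (p (Fin.last n)).im - ∑ k : Fin n, (p k.castSucc).im ^ 2 := rfl
  rw [rho, siegelRho, hn, hnorm]
  simp only [hk, Finset.sum_add_distrib, Finset.sum_sub_distrib, ← Finset.mul_sum]
  linear_combination -hp'

theorem tubeToSiegel_siegelToTube (hp : p ∈ TB n) (a : EuclideanSpace ℂ (Fin (n + 1))) :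
    tubeToSiegel p (siegelToTube p a) = a := by
  have hρ : (rho n p : ℂ) ≠ 0 := ofReal_ne_zero.2 (mem_TB_iff_rho_pos.1 hp).ne'
  have hs : (tubeScale p : ℂ) ≠ 0 := ofReal_ne_zero.2 (tubeScale_pos hp).ne'
  have hs2 : (tubeScale p : ℂ) ^ 2 = 2 * rho n p := by exact_mod_cast tubeScale_sq hp
  ext j
  cases j using Fin.lastCases with
  | cast k =>
    rw [tubeToSiegel_apply_castSucc, siegelToTube_apply_castSucc, add_sub_cancel_left,
      mul_div_cancel_left₀ _ hs]
  | last =>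
    rw [tubeToSiegel_apply_last, siegelToTube_apply_last, div_eq_iff (by simpa using hρ)]
    simp only [siegelToTube_apply_castSucc, add_sub_cancel_left, mul_pow, hs2,
      mul_left_comm _ (tubeScale p : ℂ), ← Finset.mul_sum]
    ring

theorem siegelToTube_tubeToSiegel (hp : p ∈ TB n) (z : Fin (n + 1) → ℂ) :
    siegelToTube p (tubeToSiegel p z) = z := by
  have hρ : (rho n p : ℂ) ≠ 0 := ofReal_ne_zero.2 (mem_TB_iff_rho_pos.1 hp).ne'
  have hs : (tubeScale p : ℂ) ≠ 0 := ofReal_ne_zero.2 (tubeScale_pos hp).ne'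
  have hs2 : (tubeScale p : ℂ) ^ 2 = 2 * rho n p := by exact_mod_cast tubeScale_sq hp
  ext j
  cases j using Fin.lastCases with
  | cast k =>
    rw [siegelToTube_apply_castSucc, tubeToSiegel_apply_castSucc, mul_div_cancel₀ _ hs,
      add_sub_cancel]
  | last =>
    rw [siegelToTube_apply_last, tubeToSiegel_apply_last]
    simp only [tubeToSiegel_apply_castSucc, div_pow, hs2, mul_div_assoc', ← Finset.sum_div]
    field_simp
    ring

theorem siegelToTube_zero (p : Fin (n + 1) → ℂ) : siegelToTube p 0 = p := by
  simp [siegelToTube]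

theorem contDiff_siegelToTube (p : Fin (n + 1) → ℂ) {m : WithTop ℕ∞} :
    ContDiff ℂ m (siegelToTube p) := by
  refine contDiff_pi.2 (Fin.lastCases ?_ fun k ↦ ?_)
  · simp only [siegelToTube_apply_last]
    fun_prop
  · simp only [siegelToTube_apply_castSucc]
    fun_prop

theorem contDiff_tubeToSiegel (p : Fin (n + 1) → ℂ) {m : WithTop ℕ∞} :
    ContDiff ℂ m (tubeToSiegel p) := by
  refine contDiff_euclidean.2 (Fin.lastCases ?_ fun k ↦ ?_)
  · simp only [tubeToSiegel_apply_last]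
    fun_prop
  · simp only [tubeToSiegel_apply_castSucc]
    fun_prop

theorem hasFDerivAt_siegelToTube_zero (p : Fin (n + 1) → ℂ) :
    HasFDerivAt (siegelToTube p) (tubeFrame p) 0 := by
  have hsum : HasFDerivAt (fun a : EuclideanSpace ℂ (Fin (n + 1)) ↦
      I * rho n p * ∑ k : Fin n, a k.castSucc ^ 2) (0 : _ →L[ℂ] ℂ) 0 := by
    have hsq (k : Fin n) : HasFDerivAt (fun a : EuclideanSpace ℂ (Fin (n + 1)) ↦
        a k.castSucc ^ 2) (0 : _ →L[ℂ] ℂ) 0 := by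
      have hpow := (EuclideanSpace.proj (𝕜 := ℂ) k.castSucc).hasFDerivAt.pow 2 (x := 0)
      exact hpow.congr_fderiv (by ext; simp)
    simpa using (HasFDerivAt.fun_sum fun k _ ↦ hsq k).const_mul (I * (rho n p : ℂ))
  have hquad := (ContinuousLinearMap.single ℂ (fun _ ↦ ℂ) (Fin.last n)).hasFDerivAt.comp _ hsum
  exact (((tubeFrame p).hasFDerivAt.const_add p).sub hquad).congr_fderiv (by simp)

/-- The biholomorphism from the unit ball onto `TB n` sending `0` to `p`: the Cayley transform
followed by `siegelToTube p`. -/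
def tubeChart (p : Fin (n + 1) → ℂ) : EuclideanSpace ℂ (Fin (n + 1)) → Fin (n + 1) → ℂ :=
  siegelToTube p ∘ perspective (cayleyForm n)

/-- The inverse of `tubeChart p`. -/
def tubeChartSymm (p : Fin (n + 1) → ℂ) : (Fin (n + 1) → ℂ) → EuclideanSpace ℂ (Fin (n + 1)) :=
  perspective (-cayleyForm n) ∘ tubeToSiegel p

theorem siegelRho_tubeToSiegel_pos (hp : p ∈ TB n) {z : Fin (n + 1) → ℂ} (hz : z ∈ TB n) :
    0 < siegelRho (tubeToSiegel p z) := by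
  rw [mem_TB_iff_rho_pos, ← siegelToTube_tubeToSiegel hp z, rho_siegelToTube hp] at hz
  exact pos_of_mul_pos_right hz (mem_TB_iff_rho_pos.1 hp).le

theorem mapsTo_tubeChart (hp : p ∈ TB n) : MapsTo (tubeChart p) (ball 0 1) (TB n) := by
  intro u hu
  rw [mem_TB_iff_rho_pos, tubeChart, comp_apply, rho_siegelToTube hp]
  exact mul_pos (mem_TB_iff_rho_pos.1 hp) (siegelRho_cayley_pos hu)

theorem mapsTo_tubeChartSymm (hp : p ∈ TB n) : MapsTo (tubeChartSymm p) (TB n) (ball 0 1) :=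
  fun _ hz ↦ cayley_symm_mem_ball (siegelRho_tubeToSiegel_pos hp hz)

theorem leftInvOn_tubeChartSymm (hp : p ∈ TB n) :
    LeftInvOn (tubeChartSymm p) (tubeChart p) (ball 0 1) := by
  intro u hu
  rw [tubeChartSymm, tubeChart, comp_apply, comp_apply, tubeToSiegel_siegelToTube hp,
    perspective_neg_perspective _ (one_add_cayleyForm_ne_zero hu)]

theorem rightInvOn_tubeChartSymm (hp : p ∈ TB n) :
    RightInvOn (tubeChartSymm p) (tubeChart p) (TB n) := by
  intro z hz
  have hne := one_sub_cayleyForm_ne_zero (siegelRho_tubeToSiegel_pos hp hz)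
  have hcayley := perspective_neg_perspective _ hne
  rw [neg_neg] at hcayley
  rw [tubeChartSymm, tubeChart, comp_apply, comp_apply, hcayley, siegelToTube_tubeToSiegel hp]

theorem contDiffAt_tubeChart (p : Fin (n + 1) → ℂ) {u : EuclideanSpace ℂ (Fin (n + 1))}
    (hu : u ∈ ball 0 1) {m : WithTop ℕ∞} : ContDiffAt ℂ m (tubeChart p) u :=
  (contDiff_siegelToTube p).contDiffAt.comp u
    (contDiffAt_perspective _ (one_add_cayleyForm_ne_zero hu))

theorem contDiffAt_tubeChartSymm (hp : p ∈ TB n) {z : Fin (n + 1) → ℂ} (hz : z ∈ TB n)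
    {m : WithTop ℕ∞} : ContDiffAt ℂ m (tubeChartSymm p) z :=
  (contDiffAt_perspective _ (one_sub_cayleyForm_ne_zero (siegelRho_tubeToSiegel_pos hp hz))).comp z
    (contDiff_tubeToSiegel p).contDiffAt

theorem tubeChart_zero (p : Fin (n + 1) → ℂ) : tubeChart p 0 = p := by
  rw [tubeChart, comp_apply, perspective_zero, siegelToTube_zero]

theorem fderiv_tubeChart_zero (p : Fin (n + 1) → ℂ) : fderiv ℂ (tubeChart p) 0 = tubeFrame p := by
  have hcayley := hasFDerivAt_perspective_zero (cayleyForm n)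
  have hsiegel := hasFDerivAt_siegelToTube_zero p
  rw [← perspective_zero (cayleyForm n)] at hsiegel
  exact (hsiegel.comp 0 hcayley).fderiv

end TubeChart

section InvLap

variable {n : ℕ} {g : (Fin (n + 1) → ℂ) → ℂ} {z : Fin (n + 1) → ℂ}

theorem pi_single_I (k : Fin (n + 1)) :
    (Pi.single k I : Fin (n + 1) → ℂ) = I • Pi.single k 1 := by
  rw [← Pi.single_smul, smul_eq_mul, mul_one]

theorem wdz_wdzbar (hg : ContDiffAt ℝ 2 g z) (j k : Fin (n + 1)) :
    wdz n j (wdzbar n k g) z = 1 / 4 * (leviForm g z (Pi.single j 1) (Pi.single k 1) +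
      I * leviForm g z (Pi.single j 1) (I • Pi.single k 1)) := by
  have hbar : HasFDerivAt (wdzbar n k g) _ z := ((hasFDerivAt_fderiv_apply hg (Pi.single k 1)).add
    ((hasFDerivAt_fderiv_apply hg (Pi.single k I)).const_mul I)).const_mul (1 / 2)
  rw [wdz, hbar.fderiv]
  simp only [pi_single_I, leviForm_apply, smul_apply, add_apply, ContinuousLinearMap.flip_apply,
    smul_smul, I_mul_I, neg_one_smul, map_neg, smul_eq_mul]
  linear_combination (-1 / 4) * fderiv ℝ (fderiv ℝ g) z (I • Pi.single j 1) (I • Pi.single k 1)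
    * I_mul_I

theorem wdzbar_wdz (hg : ContDiffAt ℝ 2 g z) (j k : Fin (n + 1)) :
    wdzbar n j (wdz n k g) z = 1 / 4 * (leviForm g z (Pi.single j 1) (Pi.single k 1) -
      I * leviForm g z (Pi.single j 1) (I • Pi.single k 1)) := by
  have hwdz : HasFDerivAt (wdz n k g) _ z := ((hasFDerivAt_fderiv_apply hg (Pi.single k 1)).sub
    ((hasFDerivAt_fderiv_apply hg (Pi.single k I)).const_mul I)).const_mul (1 / 2)
  rw [wdzbar, hwdz.fderiv]
  simp only [pi_single_I, leviForm_apply, smul_apply, sub_apply, ContinuousLinearMap.flip_apply,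
    smul_smul, I_mul_I, neg_one_smul, map_neg, smul_eq_mul]
  linear_combination (-1 / 4) * fderiv ℝ (fderiv ℝ g) z (I • Pi.single j 1) (I • Pi.single k 1)
    * I_mul_I

theorem invLap_eq_leviForm (hg : ContDiffAt ℝ 2 g z) :
    invLap n g z = 2 * rho n z *
      (∑ k : Fin n, leviForm g z (Pi.single k.castSucc 1) (Pi.single k.castSucc 1) +
        4 * ∑ k : Fin n, (z k.castSucc).im *
          leviForm g z (Pi.single (Fin.last n) 1) (Pi.single k.castSucc 1) +
        2 * ((z (Fin.last n)).im + ∑ k : Fin n, (z k.castSucc).im ^ 2 : ℝ) *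
          leviForm g z (Pi.single (Fin.last n) 1) (Pi.single (Fin.last n) 1)) := by
  have hmixed (k : Fin n) : 2 * ((z k.castSucc).im : ℂ) *
        wdz n (Fin.last n) (wdzbar n k.castSucc g) z +
      2 * ((z k.castSucc).im : ℂ) * wdzbar n (Fin.last n) (wdz n k.castSucc g) z =
        (z k.castSucc).im * leviForm g z (Pi.single (Fin.last n) 1) (Pi.single k.castSucc 1) := by
    rw [wdz_wdzbar hg, wdzbar_wdz hg]
    ring
  rw [invLap, add_assoc (∑ j : Fin n, _), ← Finset.sum_add_distrib]
  simp only [hmixed]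
  simp only [wdz_wdzbar hg, wdzbar_wdz hg, leviForm_I_smul_self hg, mul_zero, add_zero, sub_zero,
    ← Finset.mul_sum]
  ring

theorem leviForm_tubeFrame_castSucc (hg : ContDiffAt ℝ 2 g z) (hz : z ∈ TB n) (k : Fin n) :
    leviForm g z (tubeFrame z (EuclideanSpace.single k.castSucc 1))
      (tubeFrame z (EuclideanSpace.single k.castSucc 1)) =
        2 * rho n z * (leviForm g z (Pi.single k.castSucc 1) (Pi.single k.castSucc 1) +
          4 * ((z k.castSucc).im *
            leviForm g z (Pi.single (Fin.last n) 1) (Pi.single k.castSucc 1)) +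
          4 * ((z k.castSucc).im ^ 2 *
            leviForm g z (Pi.single (Fin.last n) 1) (Pi.single (Fin.last n) 1))) := by
  have hs : (2 * rho n z : ℂ) = tubeScale z ^ 2 := by exact_mod_cast (tubeScale_sq hz).symm
  rw [tubeFrame_single_castSucc, hs]
  simp only [map_add, map_smul, add_apply, smul_apply, real_smul, ofReal_mul, ofReal_ofNat,
    leviForm_comm hg (Pi.single k.castSucc 1) (Pi.single (Fin.last n) 1)]
  ring

theorem leviForm_tubeFrame_last :
    leviForm g z (tubeFrame z (EuclideanSpace.single (Fin.last n) 1))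
      (tubeFrame z (EuclideanSpace.single (Fin.last n) 1)) =
        4 * rho n z ^ 2 * leviForm g z (Pi.single (Fin.last n) 1) (Pi.single (Fin.last n) 1) := by
  rw [tubeFrame_single_last]
  simp only [map_smul, smul_apply, real_smul, ofReal_mul, ofReal_ofNat]
  ring

theorem invLap_eq_laplacian_comp_tubeChart (hg : ContDiffAt ℝ 2 g z) (hz : z ∈ TB n) :
    invLap n g z = Δ (g ∘ tubeChart z) 0 := by
  have hρ : (rho n z : ℂ) = (z (Fin.last n)).im - ∑ k : Fin n, ((z k.castSucc).im : ℂ) ^ 2 := by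
    simp [rho]
  have hg0 : ContDiffAt ℝ 2 g (tubeChart z 0) := by rwa [tubeChart_zero]
  have hpull (v : EuclideanSpace ℂ (Fin (n + 1))) : leviForm (g ∘ tubeChart z) 0 v v =
      leviForm g z (tubeFrame z v) (tubeFrame z v) := by
    rw [leviForm_comp hg0 (contDiffAt_tubeChart z (mem_ball_self one_pos)), tubeChart_zero,
      fderiv_tubeChart_zero]
  rw [invLap_eq_leviForm hg, laplacian_eq_sum_leviForm]
  simp only [hpull, Fin.sum_univ_castSucc, leviForm_tubeFrame_castSucc hg hz,
    leviForm_tubeFrame_last, Finset.sum_add_distrib, ← Finset.mul_sum, ← Finset.sum_mul]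
  push_cast
  linear_combination (-4 * rho n z *
    leviForm g z (Pi.single (Fin.last n) 1) (Pi.single (Fin.last n) 1)) * hρ

end InvLap

section Automorphism

variable {n : ℕ} {ψ φ : (Fin (n + 1) → ℂ) → Fin (n + 1) → ℂ} {z : Fin (n + 1) → ℂ}

theorem differentiableOn_tubeChartSymm_comp_tubeChart {p q : Fin (n + 1) → ℂ}
    (hp : p ∈ TB n) (hq : q ∈ TB n) (hψd : DifferentiableOn ℂ ψ (TB n))
    (hψ : MapsTo ψ (TB n) (TB n)) :
    DifferentiableOn ℂ (tubeChartSymm q ∘ ψ ∘ tubeChart p) (ball 0 1) := by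
  have hchart : DifferentiableOn ℂ (tubeChart p) (ball 0 1) := fun u hu ↦
    ((contDiffAt_tubeChart p hu).differentiableAt one_ne_zero).differentiableWithinAt
  have hsymm : DifferentiableOn ℂ (tubeChartSymm q) (TB n) := fun w hw ↦
    ((contDiffAt_tubeChartSymm hq hw).differentiableAt one_ne_zero).differentiableWithinAt
  exact hsymm.comp (hψd.comp hchart (mapsTo_tubeChart hp)) (hψ.comp (mapsTo_tubeChart hp))

theorem exists_linearIsometryEquiv_tubeChart (hψd : DifferentiableOn ℂ ψ (TB n))
    (hφd : DifferentiableOn ℂ φ (TB n)) (hψ : MapsTo ψ (TB n) (TB n))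
    (hφ : MapsTo φ (TB n) (TB n)) (hinv : InvOn φ ψ (TB n) (TB n)) (hz : z ∈ TB n) :
    ∃ U : EuclideanSpace ℂ (Fin (n + 1)) ≃ₗᵢ[ℂ] EuclideanSpace ℂ (Fin (n + 1)),
      EqOn (ψ ∘ tubeChart z) (tubeChart (ψ z) ∘ U) (ball 0 1) := by
  have hψz := hψ hz
  have hzm := mapsTo_tubeChart hz
  have hψzm := mapsTo_tubeChart hψz
  have hleft : LeftInvOn (tubeChartSymm z ∘ φ ∘ tubeChart (ψ z))
      (tubeChartSymm (ψ z) ∘ ψ ∘ tubeChart z) (ball 0 1) := fun u hu ↦ by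
    simp only [comp_apply]
    rw [rightInvOn_tubeChartSymm hψz (hψ (hzm hu)), hinv.1 (hzm hu), leftInvOn_tubeChartSymm hz hu]
  have hright : RightInvOn (tubeChartSymm z ∘ φ ∘ tubeChart (ψ z))
      (tubeChartSymm (ψ z) ∘ ψ ∘ tubeChart z) (ball 0 1) := fun u hu ↦ by
    simp only [comp_apply]
    rw [rightInvOn_tubeChartSymm hz (hφ (hψzm hu)), hinv.2 (hψzm hu),
      leftInvOn_tubeChartSymm hψz hu]
  have hzero : (tubeChartSymm (ψ z) ∘ ψ ∘ tubeChart z) 0 = 0 := by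
    have hcentre := leftInvOn_tubeChartSymm hψz (mem_ball_self one_pos)
    rw [tubeChart_zero] at hcentre
    rwa [comp_apply, comp_apply, tubeChart_zero]
  obtain ⟨U, hU⟩ := exists_linearIsometryEquiv_eqOn_ball one_pos
    (differentiableOn_tubeChartSymm_comp_tubeChart hz hψz hψd hψ)
    (differentiableOn_tubeChartSymm_comp_tubeChart hψz hz hφd hφ)
    ((mapsTo_tubeChartSymm hψz).comp (hψ.comp hzm))
    ((mapsTo_tubeChartSymm hz).comp (hφ.comp hψzm)) hleft hright hzero
  refine ⟨U, fun u hu ↦ ?_⟩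
  rw [comp_apply, comp_apply, ← hU hu, comp_apply, comp_apply,
    rightInvOn_tubeChartSymm hψz (hψ (hzm hu))]

theorem contDiffAt_of_eqOn_tubeChart {q : Fin (n + 1) → ℂ} (hz : z ∈ TB n)
    {U : EuclideanSpace ℂ (Fin (n + 1)) ≃ₗᵢ[ℂ] EuclideanSpace ℂ (Fin (n + 1))}
    (hU : EqOn (ψ ∘ tubeChart z) (tubeChart q ∘ U) (ball 0 1)) {m : WithTop ℕ∞} :
    ContDiffAt ℂ m ψ z := by
  have hball := mapsTo_tubeChartSymm hz hz
  have hψ : ψ =ᶠ[𝓝 z] tubeChart q ∘ U ∘ tubeChartSymm z := by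
    filter_upwards [(isOpen_TB n).mem_nhds hz] with w hw
    have := hU (mapsTo_tubeChartSymm hz hw)
    rwa [comp_apply, rightInvOn_tubeChartSymm hz hw] at this
  have hUball : U (tubeChartSymm z z) ∈ ball 0 1 := by simpa using hball
  exact ((contDiffAt_tubeChart q hUball).comp z
    (U.contDiff.contDiffAt.comp z (contDiffAt_tubeChartSymm hz hz))).congr_of_eventuallyEq hψ

end Automorphism

theorem stmt15 (n : ℕ) (ψ φ : (Fin (n + 1) → ℂ) → (Fin (n + 1) → ℂ))
    (hψd : DifferentiableOn ℂ ψ (TB n)) (hφd : DifferentiableOn ℂ φ (TB n))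
    (hbij : Set.BijOn ψ (TB n) (TB n)) (hinv : ∀ z ∈ TB n, φ (ψ z) = z)
    (g : (Fin (n + 1) → ℂ) → ℂ) (hg : ContDiffOn ℝ 2 g (TB n)) :
    ∀ z ∈ TB n, invLap n (g ∘ ψ) z = invLap n g (ψ z) := by
  intro z hz
  have hψz : ψ z ∈ TB n := hbij.mapsTo hz
  have hleft : LeftInvOn φ ψ (TB n) := hinv
  have hright : RightInvOn φ ψ (TB n) := by simpa only [hbij.image_eq] using hleft.rightInvOn_image
  obtain ⟨U, hU⟩ := exists_linearIsometryEquiv_tubeChart hψd hφd hbij.mapsTo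
    (hleft.mapsTo hbij.surjOn) ⟨hleft, hright⟩ hz
  have hψ : ContDiffAt ℝ 2 ψ z := (contDiffAt_of_eqOn_tubeChart hz hU).restrict_scalars ℝ
  have hgψz : ContDiffAt ℝ 2 g (ψ z) := hg.contDiffAt ((isOpen_TB n).mem_nhds hψz)
  let Uℝ : EuclideanSpace ℂ (Fin (n + 1)) ≃ₗᵢ[ℝ] EuclideanSpace ℂ (Fin (n + 1)) :=
    ⟨U.toLinearEquiv.restrictScalars ℝ, U.norm_map⟩
  have hconj : (g ∘ ψ) ∘ tubeChart z =ᶠ[𝓝 0] (g ∘ tubeChart (ψ z)) ∘ Uℝ := by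
    filter_upwards [ball_mem_nhds 0 one_pos] with u hu using congrArg g (hU hu)
  calc invLap n (g ∘ ψ) z
      = Δ ((g ∘ ψ) ∘ tubeChart z) 0 := invLap_eq_laplacian_comp_tubeChart (hgψz.comp z hψ) hz
    _ = Δ ((g ∘ tubeChart (ψ z)) ∘ Uℝ) 0 := (laplacian_congr_nhds hconj).eq_of_nhds
    _ = Δ (g ∘ tubeChart (ψ z)) 0 := by rw [laplacian_comp_linearIsometryEquiv, map_zero]
    _ = invLap n g (ψ z) := (invLap_eq_laplacian_comp_tubeChart hgψz hψz).symm
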